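/- Let G be a finite graph with edge weights x and let φ : π₁(G) → S¹ be a unitary character (equivalently, an assignment of φ(e) ∈ S¹ to each oriented edge with φ(ē) = φ(e)^{-1}). Define the twisted Laplacian Δ^φ acting on f ∈ C^{V(G)} by (Δ^φ f)(v) = Σ_{e=(v,w)} x_e (f(v) - f(w)φ(e)). Then det Δ^φ = Σ_{F ∈ F₁(G)} Π_{T ⊂ F} (2 - φ(T) - φ(T)^{-1}) · Π_{e∈F} x_e, where F₁(G) is the set of spanning subgraphs F each of whose connected components T contains exactly one cycle, and φ(T) is the holonomy of φ around the unique cycle of T (with either orientation). -/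

import Mathlib

/- Forman's theorem on the determinant of the twisted discrete Laplacian.

A finite weighted graph is modelled by a finite vertex type `V`, a finite type `ε` of
(unoriented) edges with endpoint maps `src tgt : ε → V` (a chosen reference orientation),
edge weights `x : ε → ℂ`, and a unitary character `φ : ε → ℂ` with `‖φ a‖ = 1` giving the
parallel transport along `a` in the reference orientation (and `(φ a)⁻¹` in the reverse one,
so that φ(ē) = φ(e)⁻¹). -/

noncomputable section
open Classical Finset

/-- The twisted discrete Laplacian `Δ^φ`:
`(Δ^φ f)(v) = Σ_{e=(v,w)} x_e (f v - f w · φ e)`, as a matrix. -/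
def twistedLaplacian {V ε : Type*} [Fintype V] [Fintype ε]
    (src tgt : ε → V) (x φ : ε → ℂ) : Matrix V V ℂ :=
  Matrix.of fun v w =>
    (∑ a : ε, ((if src a = v then x a else 0) + (if tgt a = v then x a else 0)))
        * (if v = w then 1 else 0)
      - ((∑ a : ε, if src a = v ∧ tgt a = w then x a * φ a else 0)
        + (∑ a : ε, if tgt a = v ∧ src a = w then x a * (φ a)⁻¹ else 0))

/-- Two vertices are connected within the subgraph `F ⊆ ε`. -/
def reachIn {V ε : Type*} (src tgt : ε → V) (F : Finset ε) (u w : V) : Prop :=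
  Relation.ReflTransGen
    (fun p q => ∃ a ∈ F, (src a = p ∧ tgt a = q) ∨ (tgt a = p ∧ src a = q)) u w

/-- Vertices of the connected component of `v` in the subgraph `F`. -/
def vertsIn {V ε : Type*} [Fintype V] (src tgt : ε → V) (F : Finset ε) (v : V) : Finset V :=
  Finset.univ.filter (fun w => reachIn src tgt F v w)

/-- Edges of the connected component of `v` in the subgraph `F`. -/
def edgesIn {V ε : Type*} (src tgt : ε → V) (F : Finset ε) (v : V) : Finset ε :=
  F.filter (fun a => reachIn src tgt F v (src a))

/-- `F` spans all vertices of `G` and each of its connected components `T` contains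
exactly one cycle, i.e. `|E(T)| = |V(T)|`; this is the set `F₁(G)`. -/
def isF₁ {V ε : Type*} [Fintype V] (src tgt : ε → V) (F : Finset ε) : Prop :=
  (∀ v, ∃ a ∈ F, src a = v ∨ tgt a = v) ∧
  (∀ v, (edgesIn src tgt F v).card = (vertsIn src tgt F v).card)

/-- One representative vertex per connected component of `F` (the minimal one). -/
def reps {V ε : Type*} [Fintype V] [LinearOrder V] (src tgt : ε → V) (F : Finset ε) :
    Finset V :=
  Finset.univ.filter (fun v => ∀ w, reachIn src tgt F v w → v ≤ w)

/-- `z` is the holonomy of `φ` around a cycle (closed, non-backtracking, visiting pairwise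
distinct vertices) contained in the connected component of `v` in the subgraph `F`.
The cycle is given by edges `c i` traversed in the direction `d i` (true = reference
orientation) for `i = 0, …, n-1`, cyclically. -/
def isCycleHolonomy {V ε : Type*} (src tgt : ε → V) (φ : ε → ℂ)
    (F : Finset ε) (v : V) (z : ℂ) : Prop :=
  ∃ n : ℕ, 0 < n ∧ ∃ c : ℕ → ε, ∃ d : ℕ → Bool,
    (∀ i < n, c i ∈ F) ∧
    (∀ i < n, (if d i then tgt (c i) else src (c i))
      = (if d ((i + 1) % n) then src (c ((i + 1) % n)) else tgt (c ((i + 1) % n)))) ∧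
    (∀ i < n, ∀ j < n,
      (if d i then src (c i) else tgt (c i)) = (if d j then src (c j) else tgt (c j))
        → i = j) ∧
    (∀ i < n, c ((i + 1) % n) = c i → d ((i + 1) % n) = d i) ∧
    reachIn src tgt F v (if d 0 then src (c 0) else tgt (c 0)) ∧
    z = ∏ i ∈ Finset.range n, (if d i then φ (c i) else (φ (c i))⁻¹)

section LinearAlgebra

variable {R : Type*} [CommRing R]

/-- The Cauchy–Binet expansion of `det (A * B)`, indexed by all maps `V → ε`. -/
lemma det_mul_eq_sum_fun {V ε : Type*} [Fintype V] [DecidableEq V] [Fintype ε]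
    (A : Matrix V ε R) (B : Matrix ε V R) :
    (A * B).det = ∑ f : V → ε, (∏ v, A v (f v)) * (B.submatrix f id).det := by
  have hrows : A * B = fun v => ∑ a, A v a • B a := by
    ext v w
    simp [Matrix.mul_apply, Finset.sum_apply]
  rw [hrows]
  refine (Matrix.detRowAlternating.toMultilinearMap.map_sum fun v a => A v a • B a).trans ?_
  refine Finset.sum_congr rfl fun f _ => ?_
  exact Matrix.detRowAlternating.toMultilinearMap.map_smul_univ (fun v => A v (f v))
    (fun v => B (f v))

/-- The terms of `det_mul_eq_sum_fun` with a given image recombine into a product of minors. -/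
lemma sum_fun_image_eq_det_mul_det {V ε : Type*} [Fintype V] [DecidableEq V] [Fintype ε]
    [DecidableEq ε] (A : Matrix V ε R) (B : Matrix ε V R) (τ : V → ε)
    (hτ : Function.Injective τ) :
    ∑ f : V → ε with univ.image f = univ.image τ,
        (∏ v, A v (f v)) * (B.submatrix f id).det
      = (A.submatrix id τ).det * (B.submatrix τ id).det := by
  rw [← Matrix.det_transpose (A.submatrix id τ), Matrix.det_apply', Finset.sum_mul]
  symm
  refine Finset.sum_bij (fun π _ => τ ∘ π) ?_ ?_ ?_ ?_
  · intro π _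
    simp only [mem_filter, mem_univ, true_and]
    rw [← Finset.image_image, Finset.image_univ_equiv]
  · intro π _ π' _ h
    ext v
    exact hτ (congrFun h v)
  · intro f hf
    simp only [mem_filter, mem_univ, true_and] at hf
    have hfinj : Function.Injective f := by
      have hcard : #(univ.image f) = #(univ : Finset V) := by
        rw [hf, Finset.card_image_of_injective _ hτ]
      simpa using Finset.card_image_iff.mp hcard
    have hmem : ∀ v, ∃ w, τ w = f v := fun v => by
      have hv : f v ∈ univ.image τ := hf ▸ Finset.mem_image_of_mem f (mem_univ v)
      simpa using hv
    choose g hg using hmem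
    have hginj : Function.Injective g := fun u v h => hfinj (by rw [← hg u, ← hg v, h])
    exact ⟨Equiv.ofBijective g (Finite.injective_iff_bijective.mp hginj), mem_univ _,
      funext fun v => hg v⟩
  · intro π _
    have hperm := Matrix.det_permute π (B.submatrix τ id)
    rw [Matrix.submatrix_submatrix, Function.id_comp] at hperm
    rw [hperm]
    simp only [Matrix.transpose_apply, Matrix.submatrix_apply, id_eq, Function.comp_apply]
    ring

/-- The determinant of `1 - N` with `N` a weighted cyclic shift. -/
lemma det_one_sub_weighted_cycle (n : ℕ) (hn : 0 < n) (w : ℕ → R) :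
    (Matrix.of fun i j : Fin n => (if i = j then (1 : R) else 0)
        - if ((i : ℕ) + 1) % n = j then w i else 0).det
      = 1 - ∏ i ∈ range n, w i := by
  obtain ⟨m, rfl⟩ := Nat.exists_eq_succ_of_ne_zero hn.ne'
  set M := (Matrix.of fun i j : Fin (m + 1) => (if i = j then (1 : R) else 0)
        - if ((i : ℕ) + 1) % (m + 1) = j then w i else 0) with hM
  obtain _ | k := m
  · rw [Matrix.det_unique]
    simp [hM]
  have hinit : ∀ i j : Fin (k + 2), (i : ℕ) < k + 1 →
      M i j = (if (i : ℕ) = j then (1 : R) else 0) - if (i : ℕ) + 1 = j then w i else 0 := by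
    intro i j hi
    simp [hM, Fin.ext_iff, Nat.mod_eq_of_lt (show (i : ℕ) + 1 < k + 2 by omega)]
  have hend : ∀ i j : Fin (k + 2), (i : ℕ) = k + 1 →
      M i j = (if k + 1 = (j : ℕ) then (1 : R) else 0) - if 0 = (j : ℕ) then w (k + 1) else 0 := by
    intro i j hi
    simp [hM, Fin.ext_iff, hi]
  have hfirst : (M.submatrix (Fin.succAbove 0) Fin.succ).det = 1 := by
    rw [Matrix.det_of_isUpperTriangular]
    · refine Finset.prod_eq_one fun i _ => ?_
      rcases Nat.lt_or_ge (i : ℕ) k with h | h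
      · simp [hinit i.succ i.succ (by simpa using h)]
      · have hi : (i : ℕ) = k := by omega
        simp [hend i.succ i.succ (by simpa using hi), hi]
    · intro i j hij
      have hij' : (j : ℕ) < i := hij
      rcases Nat.lt_or_ge (i : ℕ) k with h | h
      · simp only [Matrix.submatrix_apply, Fin.succAbove_zero,
          hinit i.succ j.succ (by simpa using h), Fin.val_succ]
        rw [if_neg (by omega), if_neg (by omega), sub_zero]
      · have hi : (i : ℕ) = k := by omega
        simp only [Matrix.submatrix_apply, Fin.succAbove_zero,
          hend i.succ j.succ (by simpa using hi), Fin.val_succ]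
        rw [if_neg (by omega), if_neg (by omega), sub_zero]
  have hlast : (M.submatrix (Fin.succAbove (Fin.last (k + 1))) Fin.succ).det
      = ∏ i ∈ range (k + 1), (-w i) := by
    rw [Matrix.det_of_isLowerTriangular, Finset.prod_range]
    · refine Finset.prod_congr rfl fun i _ => ?_
      simp [hinit i.castSucc i.succ i.2]
    · intro i j hij
      have hij' : (i : ℕ) < j := hij
      simp only [Matrix.submatrix_apply, Fin.succAbove_last, hinit i.castSucc j.succ i.2,
        Fin.val_succ, Fin.val_castSucc]
      rw [if_neg (by omega), if_neg (by omega), sub_zero]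
  have hmid : ∀ i : Fin k, M i.castSucc.succ 0 = 0 := fun i => by
    simp [hinit i.castSucc.succ 0 (by simp)]
  have hcorner : M (Fin.last (k + 1)) 0 = -w (k + 1) := by
    simp [hend (Fin.last (k + 1)) 0 (by simp)]
  have hzero : M 0 0 = 1 := by simp [hinit 0 0 (by simp)]
  rw [Matrix.det_succ_column_zero, Fin.sum_univ_succ, Fin.sum_univ_castSucc]
  simp only [hmid, Fin.succ_last, hfirst, hlast, hcorner, hzero, Finset.prod_neg,
    Finset.card_range, Finset.prod_range_succ _ (k + 1), Fin.val_last, Fin.val_zero]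
  have hsign : ((-1 : R) ^ (k + 1)) * (-1) ^ (k + 1) = 1 := by
    rw [← mul_pow]; simp
  simp only [mul_zero, zero_mul, Finset.sum_const_zero, pow_zero, mul_one, zero_add,
    Nat.succ_eq_add_one]
  linear_combination (-(w (k + 1)) * ∏ i ∈ range (k + 1), w i) * hsign

end LinearAlgebra

section Darts

variable {V ε : Type*} (src tgt : ε → V)

/-- Starting vertex of an oriented edge (`true` is the reference orientation). -/
def dartStart (e : ε × Bool) : V := if e.2 then src e.1 else tgt e.1

/-- Final vertex of an oriented edge. -/
def dartEnd (e : ε × Bool) : V := if e.2 then tgt e.1 else src e.1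

/-- Parallel transport along an oriented edge. -/
def dartWeight (ψ : ε → ℂ) (e : ε × Bool) : ℂ := if e.2 then ψ e.1 else (ψ e.1)⁻¹

/-- The oriented edges `e 0, …, e (n - 1)` form a cycle in the component of `v` in `F`. -/
structure IsDartCycle (F : Finset ε) (v : V) (n : ℕ) (e : ℕ → ε × Bool) : Prop where
  pos : 0 < n
  mem : ∀ i < n, (e i).1 ∈ F
  chain : ∀ i < n, dartEnd src tgt (e i) = dartStart src tgt (e ((i + 1) % n))
  inj : ∀ i < n, ∀ j < n, dartStart src tgt (e i) = dartStart src tgt (e j) → i = j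
  no_backtrack : ∀ i < n, (e ((i + 1) % n)).1 = (e i).1 → (e ((i + 1) % n)).2 = (e i).2
  reach : reachIn src tgt F v (dartStart src tgt (e 0))

variable {src tgt}

lemma isCycleHolonomy.exists_isDartCycle {φ : ε → ℂ} {F : Finset ε} {v : V} {z : ℂ}
    (h : isCycleHolonomy src tgt φ F v z) :
    ∃ n e, IsDartCycle src tgt F v n e ∧ z = ∏ i ∈ range n, dartWeight φ (e i) := by
  obtain ⟨n, hn, c, d, hmem, hchain, hinj, hback, hreach, rfl⟩ := h
  exact ⟨n, fun i => (c i, d i), ⟨hn, hmem, hchain, hinj, hback, hreach⟩, rfl⟩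

lemma dartWeight_inv (ψ : ε → ℂ) (e : ε × Bool) :
    dartWeight (fun a => (ψ a)⁻¹) e = (dartWeight ψ e)⁻¹ := by
  unfold dartWeight
  split <;> rfl

variable {F : Finset ε}

lemma reachIn.symm {u v : V} (h : reachIn src tgt F u v) : reachIn src tgt F v u := by
  induction h with
  | refl => exact Relation.ReflTransGen.refl
  | tail _ hstep ih =>
    obtain ⟨a, ha, h⟩ := hstep
    exact Relation.ReflTransGen.head ⟨a, ha, by tauto⟩ ih

lemma reachIn_dart {e : ε × Bool} (he : e.1 ∈ F) :
    reachIn src tgt F (dartStart src tgt e) (dartEnd src tgt e) := by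
  obtain ⟨a, _ | _⟩ := e
  · exact Relation.ReflTransGen.single ⟨a, he, Or.inr ⟨rfl, rfl⟩⟩
  · exact Relation.ReflTransGen.single ⟨a, he, Or.inl ⟨rfl, rfl⟩⟩

lemma reachIn_dart_src {e : ε × Bool} (he : e.1 ∈ F) :
    reachIn src tgt F (dartStart src tgt e) (src e.1) := by
  obtain ⟨a, _ | _⟩ := e
  · exact reachIn_dart (e := (a, false)) he
  · exact Relation.ReflTransGen.refl

lemma IsDartCycle.reach_start {v : V} {n : ℕ} {e : ℕ → ε × Bool}
    (h : IsDartCycle src tgt F v n e) {i : ℕ} (hi : i < n) :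
    reachIn src tgt F v (dartStart src tgt (e i)) := by
  induction i with
  | zero => exact h.reach
  | succ i ih =>
    have hstep := reachIn_dart (src := src) (tgt := tgt) (h.mem i (by omega))
    rw [h.chain i (by omega), Nat.mod_eq_of_lt hi] at hstep
    exact (ih (by omega)).trans hstep

/-- Every subgraph with a perfect incidence matching between vertices and edges is in `F₁`. -/
lemma isF₁_of_injective [Fintype V] (τ : V → ε) (hτ : Function.Injective τ)
    (hinc : ∀ v, src (τ v) = v ∨ tgt (τ v) = v) : isF₁ src tgt (univ.image τ) := by
  have hmem : ∀ v, τ v ∈ univ.image τ := fun v => mem_image_of_mem τ (mem_univ v)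
  have hsrc : ∀ v, reachIn src tgt (univ.image τ) v (src (τ v)) := fun v => by
    rcases hinc v with h | h
    · rw [h]; exact Relation.ReflTransGen.refl
    · exact Relation.ReflTransGen.single ⟨τ v, hmem v, Or.inr ⟨h, rfl⟩⟩
  refine ⟨fun v => ⟨τ v, hmem v, hinc v⟩, fun v => ?_⟩
  have hedges : edgesIn src tgt (univ.image τ) v = (vertsIn src tgt (univ.image τ) v).image τ := by
    ext a
    simp only [edgesIn, vertsIn, mem_filter, mem_image, mem_univ, true_and]
    constructor
    · rintro ⟨⟨w, rfl⟩, hw⟩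
      exact ⟨w, hw.trans (hsrc w).symm, rfl⟩
    · rintro ⟨w, hw, rfl⟩
      exact ⟨⟨w, rfl⟩, hw.trans (hsrc w)⟩
  rw [hedges, Finset.card_image_of_injective _ hτ]

/-- In a subgraph of `F₁`, an injective choice of incident edges exhausts all edges. -/
lemma isF₁.image_eq [Fintype V] (hF : isF₁ src tgt F) (f : V → ε × Bool)
    (hf : Function.Injective fun v => (f v).1) (hstart : ∀ v, dartStart src tgt (f v) = v)
    (hmem : ∀ v, (f v).1 ∈ F) : univ.image (fun v => (f v).1) = F := by
  refine Finset.Subset.antisymm (by simpa [Finset.subset_iff] using hmem) fun a ha => ?_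
  have hsub : (vertsIn src tgt F (src a)).image (fun v => (f v).1) ⊆ edgesIn src tgt F (src a) := by
    intro b hb
    simp only [edgesIn, vertsIn, mem_filter, mem_image, mem_univ, true_and] at hb ⊢
    obtain ⟨w, hw, rfl⟩ := hb
    have := reachIn_dart_src (src := src) (tgt := tgt) (hmem w)
    rw [hstart] at this
    exact ⟨hmem w, hw.trans this⟩
  have heq := Finset.eq_of_subset_of_card_le hsub
    (by rw [Finset.card_image_of_injective _ hf, hF.2])
  have haE : a ∈ edgesIn src tgt F (src a) := by
    simp only [edgesIn, mem_filter]
    exact ⟨ha, Relation.ReflTransGen.refl⟩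
  rw [← heq] at haE
  exact Finset.image_subset_image (subset_univ _) haE

section Reps

variable [Fintype V] [LinearOrder V]

lemma exists_mem_reps (src tgt : ε → V) (F : Finset ε) (v : V) :
    ∃ r ∈ reps src tgt F, reachIn src tgt F r v := by
  have hne : (vertsIn src tgt F v).Nonempty :=
    ⟨v, by simp only [vertsIn, mem_filter, mem_univ, true_and]; exact Relation.ReflTransGen.refl⟩
  obtain ⟨r, hr, hmin⟩ := Finset.exists_min_image _ id hne
  simp only [vertsIn, mem_filter, mem_univ, true_and, id_eq] at hr hmin
  refine ⟨r, ?_, hr.symm⟩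
  simp only [reps, mem_filter, mem_univ, true_and]
  exact fun w hw => hmin w (hr.trans hw)

lemma eq_of_mem_reps {r s : V} (hr : r ∈ reps src tgt F) (hs : s ∈ reps src tgt F)
    (h : reachIn src tgt F r s) : r = s := by
  simp only [reps, mem_filter, mem_univ, true_and] at hr hs
  exact le_antisymm (hr s h) (hs r h.symm)

/-- A choice `f` of an outgoing oriented edge at each vertex, following the given cycles `e r`
and otherwise decreasing `rank`, which vanishes exactly on the cycles. -/
structure IsCycleOrientation (src tgt : ε → V) (F : Finset ε) (n : V → ℕ)
    (e : V → ℕ → ε × Bool) (f : V → ε × Bool) (rank : V → ℕ) : Prop where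
  start : ∀ v, dartStart src tgt (f v) = v
  mem : ∀ v, (f v).1 ∈ F
  rank_lt : ∀ v, rank v ≠ 0 → rank (dartEnd src tgt (f v)) < rank v
  cycle : ∀ r ∈ reps src tgt F, ∀ i < n r, f (dartStart src tgt (e r i)) = e r i
  rank_eq_zero : ∀ v, rank v = 0 ↔
    ∃ r ∈ reps src tgt F, ∃ i < n r, dartStart src tgt (e r i) = v

lemma exists_isCycleOrientation {n : V → ℕ} {e : V → ℕ → ε × Bool}
    (he : ∀ r, IsDartCycle src tgt F r (n r) (e r)) :
    ∃ f rank, IsCycleOrientation src tgt F n e f rank := by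
  let onCycle : V → Prop := fun v =>
    ∃ r ∈ reps src tgt F, ∃ i < n r, dartStart src tgt (e r i) = v
  let near : ℕ → V → Prop := fun k => Nat.rec (motive := fun _ => V → Prop) onCycle
    (fun _ P v => ∃ a : ε × Bool, a.1 ∈ F ∧ dartStart src tgt a = v ∧ P (dartEnd src tgt a)) k
  have hnear : ∀ v, ∃ k, near k v := by
    intro v
    obtain ⟨r, hr, hrv⟩ := exists_mem_reps src tgt F v
    have hreach : reachIn src tgt F v (dartStart src tgt (e r 0)) := hrv.symm.trans (he r).reach
    induction hreach using Relation.ReflTransGen.head_induction_on with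
    | refl => exact ⟨0, r, hr, 0, (he r).pos, rfl⟩
    | head hstep _ ih =>
      obtain ⟨a, ha, ⟨h1, h2⟩ | ⟨h1, h2⟩⟩ := hstep
      all_goals
        obtain ⟨k, hk⟩ := ih (hrv.trans (Relation.ReflTransGen.single ⟨a, ha, by tauto⟩))
      · exact ⟨k + 1, (a, true), ha, h1, by subst h2; exact hk⟩
      · exact ⟨k + 1, (a, false), ha, h1, by subst h2; exact hk⟩
  have hleast : ∀ v : V, ∃ k : ℕ, near k v ∧ ∀ j, near j v → k ≤ j := fun v =>
    ⟨Nat.find (hnear v), Nat.find_spec (hnear v), fun _ hj => Nat.find_min' (hnear v) hj⟩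
  choose rank hspec hmin using hleast
  have hrank : ∀ v, rank v = 0 ↔ onCycle v := fun v =>
    ⟨fun h => by have h0 := hspec v; rw [h] at h0; exact h0,
      fun h => Nat.le_zero.mp (hmin v 0 h)⟩
  have hchoice : ∀ v, ∃ a : ε × Bool, dartStart src tgt a = v ∧ a.1 ∈ F ∧
      (rank v ≠ 0 → rank (dartEnd src tgt a) < rank v) ∧
      ∀ r ∈ reps src tgt F, ∀ i < n r, dartStart src tgt (e r i) = v → a = e r i := by
    intro v
    by_cases hv : onCycle v
    · obtain ⟨r, hr, i, hi, rfl⟩ := id hv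
      refine ⟨e r i, rfl, (he r).mem i hi, fun h => absurd ((hrank _).mpr hv) h, ?_⟩
      intro s hs j hj hsj
      have hrs : r = s := eq_of_mem_reps hr hs
        (((he r).reach_start hi).trans (hsj ▸ ((he s).reach_start hj).symm))
      subst hrs
      rw [(he r).inj i hi j hj hsj.symm]
    · have hpos : rank v ≠ 0 := fun h => hv ((hrank v).mp h)
      obtain ⟨k, hk⟩ := Nat.exists_eq_succ_of_ne_zero hpos
      have hv' := hspec v
      rw [hk] at hv'
      obtain ⟨a, ha, hstart, hend⟩ := hv'
      refine ⟨a, hstart, ha, fun _ => ?_, fun r hr i hi h => absurd ⟨r, hr, i, hi, h⟩ hv⟩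
      rw [hk]
      exact Nat.lt_succ_of_le (hmin _ k hend)
  choose f hstart hmem hlt hcyc using hchoice
  exact ⟨f, rank, hstart, hmem, hlt, fun r hr i hi => hcyc _ r hr i hi rfl, hrank⟩

namespace IsCycleOrientation

variable {n : V → ℕ} {e : V → ℕ → ε × Bool} {f : V → ε × Bool} {rank : V → ℕ}

lemma exists_end_of_rank_eq_zero (h : IsCycleOrientation src tgt F n e f rank)
    (he : ∀ r, IsDartCycle src tgt F r (n r) (e r)) {v : V} (hv : rank v = 0) :
    ∃ r ∈ reps src tgt F, ∃ i < n r, f v = e r i ∧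
      f (dartEnd src tgt (f v)) = e r ((i + 1) % n r) ∧ rank (dartEnd src tgt (f v)) = 0 := by
  obtain ⟨r, hr, i, hi, rfl⟩ := (h.rank_eq_zero v).mp hv
  have hi' : (i + 1) % n r < n r := Nat.mod_lt _ (he r).pos
  refine ⟨r, hr, i, hi, h.cycle r hr i hi, ?_, ?_⟩
  · rw [h.cycle r hr i hi, (he r).chain i hi, h.cycle r hr _ hi']
  · rw [h.cycle r hr i hi, (he r).chain i hi]
    exact (h.rank_eq_zero _).mpr ⟨r, hr, _, hi', rfl⟩

lemma rank_end_le (h : IsCycleOrientation src tgt F n e f rank)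
    (he : ∀ r, IsDartCycle src tgt F r (n r) (e r)) (v : V) :
    rank (dartEnd src tgt (f v)) ≤ rank v := by
  by_cases hv : rank v = 0
  · obtain ⟨_, _, _, _, _, _, h0⟩ := h.exists_end_of_rank_eq_zero he hv
    omega
  · exact (h.rank_lt v hv).le

lemma injective (h : IsCycleOrientation src tgt F n e f rank)
    (he : ∀ r, IsDartCycle src tgt F r (n r) (e r)) : Function.Injective fun v => (f v).1 := by
  intro u v huv
  by_contra hne
  have hedge : (f u).1 = (f v).1 := huv
  have hdir : (f u).2 ≠ (f v).2 := fun hd =>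
    hne (by rw [← h.start u, ← h.start v, Prod.ext hedge hd])
  have hflip : ∀ a b : ε × Bool, a.1 = b.1 → a.2 ≠ b.2 →
      dartEnd src tgt a = dartStart src tgt b := by
    rintro ⟨a, _ | _⟩ ⟨b, _ | _⟩ hab hd <;> simp_all [dartStart, dartEnd]
  have huend : dartEnd src tgt (f u) = v := (hflip _ _ hedge hdir).trans (h.start v)
  have hvend : dartEnd src tgt (f v) = u := (hflip _ _ hedge.symm hdir.symm).trans (h.start u)
  have hle := h.rank_end_le he u
  have hle' := h.rank_end_le he v
  rw [huend] at hle
  rw [hvend] at hle'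
  by_cases hu : rank u = 0
  · obtain ⟨r, _, i, hi, h1, h2, _⟩ := h.exists_end_of_rank_eq_zero he hu
    rw [huend] at h2
    refine hdir ?_
    rw [h1, h2] at hedge ⊢
    exact ((he r).no_backtrack i hi hedge.symm).symm
  · have := h.rank_lt u hu
    rw [huend] at this
    omega

end IsCycleOrientation

end Reps

end Darts

section Incidence

variable {V ε : Type*}

/-- The twisted incidence matrix: the row of `a` is `δ_{src a} - ψ a • δ_{tgt a}`. -/
def twistedIncidence (src tgt : ε → V) (ψ : ε → ℂ) : Matrix ε V ℂ :=
  Matrix.of fun a v => (if src a = v then 1 else 0) - (if tgt a = v then ψ a else 0)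

lemma twistedLaplacian_eq_mul [Fintype V] [Fintype ε] (src tgt : ε → V) (x φ : ε → ℂ)
    (hφ : ∀ a, φ a ≠ 0) :
    twistedLaplacian src tgt x φ
      = (Matrix.of fun v a => x a * twistedIncidence src tgt (fun a => (φ a)⁻¹) a v)
        * twistedIncidence src tgt φ := by
  ext v w
  simp only [twistedLaplacian, twistedIncidence, Matrix.of_apply, Matrix.mul_apply]
  rw [Finset.sum_mul, ← Finset.sum_add_distrib, ← Finset.sum_sub_distrib]
  refine Finset.sum_congr rfl fun a _ => ?_
  have hinv : (φ a)⁻¹ * φ a = 1 := inv_mul_cancel₀ (hφ a)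
  by_cases hvw : v = w
  · subst hvw
    by_cases h1 : src a = v <;> by_cases h2 : tgt a = v <;> simp [h1, h2]
    · linear_combination (-x a) * hinv
    · linear_combination (-x a) * hinv
  · have hsrc : src a = v → src a ≠ w := fun h h' => hvw (h.symm.trans h')
    have htgt : tgt a = v → tgt a ≠ w := fun h h' => hvw (h.symm.trans h')
    by_cases h1 : src a = v <;> by_cases h2 : tgt a = v <;> by_cases h3 : src a = w <;>
      by_cases h4 : tgt a = w <;> simp_all

lemma exists_injective_incident_of_det_ne_zero [Fintype V] [DecidableEq V] {src tgt : ε → V}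
    {ψ : ε → ℂ} {f : V → ε} (h : ((twistedIncidence src tgt ψ).submatrix f id).det ≠ 0) :
    Function.Injective f ∧ ∃ π : Equiv.Perm V, ∀ v, src (f (π v)) = v ∨ tgt (f (π v)) = v := by
  constructor
  · intro u v huv
    by_contra hne
    refine h (Matrix.det_zero_of_row_eq hne ?_)
    ext w
    simp [huv]
  · rw [Matrix.det_apply'] at h
    obtain ⟨π, _, hπ⟩ := Finset.exists_ne_zero_of_sum_ne_zero h
    refine ⟨π, fun v => ?_⟩
    have hv := Finset.prod_ne_zero_iff.mp (right_ne_zero_of_mul hπ) v (mem_univ v)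
    by_contra! hcon
    exact hv (by simp [twistedIncidence, hcon.1, hcon.2])

lemma isF₁_image_of_det_ne_zero [Fintype V] [DecidableEq V] {src tgt : ε → V}
    {ψ : ε → ℂ} {f : V → ε} (h : ((twistedIncidence src tgt ψ).submatrix f id).det ≠ 0) :
    isF₁ src tgt (univ.image f) := by
  obtain ⟨hinj, π, hπ⟩ := exists_injective_incident_of_det_ne_zero h
  have hF := isF₁_of_injective (f ∘ π) (hinj.comp π.injective) hπ
  rwa [← Finset.image_image, Finset.image_univ_equiv] at hF

lemma twistedIncidence_dart (src tgt : ε → V) {ψ : ε → ℂ} (hψ : ∀ a, ψ a ≠ 0) (e : ε × Bool)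
    (u : V) : twistedIncidence src tgt ψ e.1 u = (if e.2 then 1 else -ψ e.1) *
      ((if dartStart src tgt e = u then 1 else 0)
        - if dartEnd src tgt e = u then dartWeight ψ e else 0) := by
  obtain ⟨a, _ | _⟩ := e
  · have hinv : ψ a * (ψ a)⁻¹ = 1 := mul_inv_cancel₀ (hψ a)
    by_cases h1 : src a = u <;> by_cases h2 : tgt a = u <;>
      simp [twistedIncidence, dartStart, dartEnd, dartWeight, h1, h2, mul_sub, hinv]
    ring
  · simp [twistedIncidence, dartStart, dartEnd, dartWeight]

variable [Fintype V] [LinearOrder V] {src tgt : ε → V} {F : Finset ε}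
  {n : V → ℕ} {e : V → ℕ → ε × Bool} {f : V → ε × Bool} {rank : V → ℕ}

lemma IsCycleOrientation.det_one_sub (h : IsCycleOrientation src tgt F n e f rank)
    (he : ∀ r, IsDartCycle src tgt F r (n r) (e r)) (ψ : ε → ℂ) :
    (Matrix.of fun v u : V => (if v = u then (1 : ℂ) else 0)
        - if dartEnd src tgt (f v) = u then dartWeight ψ (f v) else 0).det
      = ∏ r ∈ reps src tgt F, (1 - ∏ i ∈ range (n r), dartWeight ψ (e r i)) := by
  set M := (Matrix.of fun v u : V => (if v = u then (1 : ℂ) else 0)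
        - if dartEnd src tgt (f v) = u then dartWeight ψ (f v) else 0) with hM
  choose ρ hρ hρreach using exists_mem_reps src tgt F
  have hρend : ∀ v, ρ (dartEnd src tgt (f v)) = ρ v := fun v => by
    have hstep := reachIn_dart (src := src) (tgt := tgt) (h.mem v)
    rw [h.start] at hstep
    exact eq_of_mem_reps (hρ _) (hρ _) ((hρreach _).trans (hstep.symm.trans (hρreach v).symm))
  let b : V → (ℕ ×ₗ V)ᵒᵈ := fun v => OrderDual.toDual (toLex (rank v, ρ v))
  have hb : ∀ v k r, b v = OrderDual.toDual (toLex (k, r)) ↔ rank v = k ∧ ρ v = r :=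
    fun v k r => by simp [b]
  have htri : M.BlockTriangular b := by
    intro v u hlt
    have hle : b v ≤ b (dartEnd src tgt (f v)) := by
      simp only [b, OrderDual.toDual_le_toDual, Prod.Lex.toLex_le_toLex, hρend]
      rcases (h.rank_end_le he v).lt_or_eq with h' | h'
      · exact Or.inl h'
      · exact Or.inr ⟨h', le_rfl⟩
    have h1 : v ≠ u := by rintro rfl; exact lt_irrefl _ hlt
    have h2 : dartEnd src tgt (f v) ≠ u := by rintro rfl; exact absurd hle (not_le.mpr hlt)
    simp [hM, h1, h2]
  have hcycle : ∀ r ∈ reps src tgt F, ∀ i < n r,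
      b (dartStart src tgt (e r i)) = OrderDual.toDual (toLex (0, r)) := by
    intro r hr i hi
    refine (hb _ _ _).mpr ⟨(h.rank_eq_zero _).mpr ⟨r, hr, i, hi, rfl⟩, ?_⟩
    exact eq_of_mem_reps (hρ _) hr ((hρreach _).trans ((he r).reach_start hi).symm)
  have hblock : ∀ r ∈ reps src tgt F,
      (M.toSquareBlock b (OrderDual.toDual (toLex (0, r)))).det
        = 1 - ∏ i ∈ range (n r), dartWeight ψ (e r i) := by
    intro r hr
    let g : Fin (n r) → {v // b v = OrderDual.toDual (toLex (0, r))} :=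
      fun i => ⟨dartStart src tgt (e r i), hcycle r hr i i.2⟩
    have hg : Function.Bijective g := by
      constructor
      · intro i j hij
        exact Fin.ext ((he r).inj i i.2 j j.2 (congrArg Subtype.val hij))
      · rintro ⟨v, hv⟩
        obtain ⟨h0, hr'⟩ := (hb _ _ _).mp hv
        obtain ⟨s, hs, i, hi, rfl⟩ := (h.rank_eq_zero v).mp h0
        obtain rfl : s = r := ((hb _ _ _).mp (hcycle s hs i hi)).2.symm.trans hr'
        exact ⟨⟨i, hi⟩, rfl⟩
    rw [← Matrix.det_submatrix_equiv_self (Equiv.ofBijective g hg),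
      ← det_one_sub_weighted_cycle (n r) (he r).pos fun i => dartWeight ψ (e r i)]
    congr 1
    ext i j
    have hmod : ((i : ℕ) + 1) % n r < n r := Nat.mod_lt _ (he r).pos
    have h1 : dartStart src tgt (e r i) = dartStart src tgt (e r j) ↔ i = j :=
      ⟨fun hij => Fin.ext ((he r).inj i i.2 j j.2 hij), fun hij => hij ▸ rfl⟩
    have h2 : dartStart src tgt (e r (((i : ℕ) + 1) % n r)) = dartStart src tgt (e r j) ↔
        ((i : ℕ) + 1) % n r = j :=
      ⟨fun hij => (he r).inj _ hmod j j.2 hij, fun hij => hij ▸ rfl⟩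
    simp only [hM, Matrix.toSquareBlock, Matrix.toSquareBlockProp, Matrix.submatrix_apply,
      Matrix.toBlock_apply, Matrix.of_apply, Equiv.ofBijective_apply, g, h.cycle r hr i i.2,
      (he r).chain i i.2, h1, h2]
  rw [htri.det]
  have hsub : (reps src tgt F).image (fun r => OrderDual.toDual (toLex (0, r))) ⊆
      univ.image b := by
    intro k hk
    obtain ⟨r, hr, rfl⟩ := mem_image.mp hk
    exact mem_image.mpr ⟨_, mem_univ _, hcycle r hr 0 (he r).pos⟩
  rw [← Finset.prod_subset hsub, Finset.prod_image (fun r _ s _ hrs => by simpa using hrs)]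
  · exact Finset.prod_congr rfl hblock
  · intro k hk hk'
    obtain ⟨v, _, rfl⟩ := mem_image.mp hk
    have hv : rank v ≠ 0 := fun h0 =>
      hk' (mem_image.mpr ⟨ρ v, hρ v, ((hb v 0 (ρ v)).mpr ⟨h0, rfl⟩).symm⟩)
    have hone : M.toSquareBlock b (b v) = 1 := by
      ext ⟨u, hu⟩ ⟨w, hw⟩
      obtain ⟨hu1, -⟩ := (hb _ _ _).mp hu
      obtain ⟨hw1, -⟩ := (hb _ _ _).mp hw
      have hend : dartEnd src tgt (f u) ≠ w := by
        rintro rfl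
        have := h.rank_lt u (hu1 ▸ hv)
        omega
      simp [hM, Matrix.toSquareBlock, Matrix.toSquareBlockProp, hend, Matrix.one_apply]
    rw [hone, Matrix.det_one]

lemma IsCycleOrientation.det_twistedIncidence (h : IsCycleOrientation src tgt F n e f rank)
    (he : ∀ r, IsDartCycle src tgt F r (n r) (e r)) {ψ : ε → ℂ} (hψ : ∀ a, ψ a ≠ 0) :
    ((twistedIncidence src tgt ψ).submatrix (fun v => (f v).1) id).det
      = (∏ v, if (f v).2 then 1 else -ψ (f v).1) *
        ∏ r ∈ reps src tgt F, (1 - ∏ i ∈ range (n r), dartWeight ψ (e r i)) := by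
  rw [← h.det_one_sub he ψ, ← Matrix.det_mul_column]
  congr 1
  ext v u
  simp only [Matrix.submatrix_apply, id_eq, Matrix.of_apply, twistedIncidence_dart src tgt hψ,
    h.start]
  congr!

end Incidence

/-- **Forman's theorem**: `det Δ^φ = Σ_{F ∈ F₁(G)} Π_{T ⊆ F} (2 - φ(T) - φ(T)⁻¹) · x(F)`,
where the product is over the connected components `T` of `F` and `φ(T)` is the holonomy
of `φ` around the unique cycle of `T`. -/
theorem forman_determinant_twisted_laplacian
    {V ε : Type*} [Fintype V] [LinearOrder V] [Fintype ε]
    (src tgt : ε → V) (x φ : ε → ℂ) (hφ : ∀ a, ‖φ a‖ = 1)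
    (hol : Finset ε → V → ℂ)
    (hhol : ∀ F : Finset ε, isF₁ src tgt F → ∀ v : V,
      isCycleHolonomy src tgt φ F v (hol F v)) :
    (twistedLaplacian src tgt x φ).det
      = ∑ F : Finset ε,
          if isF₁ src tgt F then
            (∏ v ∈ reps src tgt F, (2 - hol F v - (hol F v)⁻¹)) * ∏ a ∈ F, x a
          else 0 := by
  have hφ0 : ∀ a, φ a ≠ 0 := fun a h => by simpa [h] using hφ a
  rw [twistedLaplacian_eq_mul src tgt x φ hφ0, det_mul_eq_sum_fun,
    ← Finset.sum_fiberwise_of_maps_to (t := (univ : Finset (Finset ε)))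
      (g := fun f => univ.image f) (fun _ _ => mem_univ _)]
  refine Finset.sum_congr rfl fun F _ => ?_
  split_ifs with hF
  · choose n e he hprod using fun v => (hhol F hF v).exists_isDartCycle
    obtain ⟨f, rank, hf⟩ := exists_isCycleOrientation he
    have himage := hF.image_eq f (hf.injective he) hf.start hf.mem
    have hsum := sum_fun_image_eq_det_mul_det
      (Matrix.of fun v a => x a * twistedIncidence src tgt (fun a => (φ a)⁻¹) a v)
      (twistedIncidence src tgt φ) _ (hf.injective he)
    rw [himage] at hsum
    refine hsum.trans ?_
    have hleft : ((Matrix.of fun v a => x a * twistedIncidence src tgt (fun a => (φ a)⁻¹) a v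
        ).submatrix id fun v => (f v).1).det = (∏ v, x (f v).1) *
          ((twistedIncidence src tgt fun a => (φ a)⁻¹).submatrix (fun v => (f v).1) id).det := by
      rw [← Matrix.det_transpose, ← Matrix.det_mul_column]
      rfl
    have hx : ∏ v, x (f v).1 = ∏ a ∈ F, x a := by
      rw [← himage, Finset.prod_image fun u _ v _ huv => hf.injective he huv]
    rw [hleft, hx, hf.det_twistedIncidence he hφ0,
      hf.det_twistedIncidence he fun a => inv_ne_zero (hφ0 a)]
    have hsign : (∏ v, if (f v).2 then (1 : ℂ) else -(φ (f v).1)⁻¹) *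
        ∏ v, (if (f v).2 then (1 : ℂ) else -φ (f v).1) = 1 := by
      rw [← Finset.prod_mul_distrib]
      refine Finset.prod_eq_one fun v _ => ?_
      split <;> simp [hφ0]
    have hholonomy : (∏ r ∈ reps src tgt F,
          (1 - ∏ i ∈ range (n r), dartWeight (fun a => (φ a)⁻¹) (e r i))) *
        ∏ r ∈ reps src tgt F, (1 - ∏ i ∈ range (n r), dartWeight φ (e r i))
        = ∏ v ∈ reps src tgt F, (2 - hol F v - (hol F v)⁻¹) := by
      rw [← Finset.prod_mul_distrib]
      refine Finset.prod_congr rfl fun r _ => ?_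
      have hne : hol F r ≠ 0 := by
        rw [hprod r]
        refine Finset.prod_ne_zero_iff.mpr fun i _ => ?_
        unfold dartWeight
        split <;> simp [hφ0]
      simp only [dartWeight_inv, Finset.prod_inv_distrib, ← hprod r]
      field_simp
      ring
    rw [← hholonomy]
    linear_combination (∏ a ∈ F, x a) * (∏ r ∈ reps src tgt F,
          (1 - ∏ i ∈ range (n r), dartWeight (fun a => (φ a)⁻¹) (e r i))) *
        (∏ r ∈ reps src tgt F, (1 - ∏ i ∈ range (n r), dartWeight φ (e r i))) * hsign
  · refine Finset.sum_eq_zero fun f hf => ?_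
    by_contra hne
    obtain rfl : univ.image f = F := by simpa using hf
    exact hF (isF₁_image_of_det_ne_zero (right_ne_zero_of_mul hne))

end
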